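/- Let a₁ ≠ 0 be real and s > −3/4. Then there exist b ∈ (1/2, 1), ε > 0 and C > 0, depending only on s, b and b', such that for all σ ≥ 0, all b' ∈ [b, b+ε), and all Schwartz functions f, g on ℝ²: ‖∂_x(fg)‖_{X_{a₁}^{σ,s,b'−1}} ≤ C ‖f‖_{X_{a₁}^{σ,s,b}} ‖g‖_{X_{a₁}^{σ,s,b}}. -/

import Mathlib

open MeasureTheory Set Filter
open scoped ENNReal

/-- Space-time Fourier transform `f̂(τ,ξ) = ∫∫ e^{-i(tτ + xξ)} f(t,x) dt dx`. -/
noncomputable def FT2 (f : ℝ → ℝ → ℂ) (τ ξ : ℝ) : ℂ :=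
  ∫ t : ℝ, ∫ x : ℝ, Complex.exp (-Complex.I * (t * τ + x * ξ)) * f t x

/-- Gevrey–Bourgain norm `‖f‖_{X_a^{σ,s,b}}`, valued in `ℝ≥0∞`. -/
noncomputable def XNorm (a σ s b : ℝ) (f : ℝ → ℝ → ℂ) : ℝ≥0∞ :=
  (∫⁻ τ : ℝ, ∫⁻ ξ : ℝ, ENNReal.ofReal
      (Real.exp (2 * σ * |ξ|) * (1 + |ξ|) ^ (2 * s) *
        (1 + |τ - a * ξ ^ 3|) ^ (2 * b) * ‖FT2 f τ ξ‖ ^ 2)) ^ (1/2 : ℝ)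

/-!
On the Fourier side the estimate is an `L²` bound for a convolution of `F = w |f̂|` and
`G = w |ĝ|`, `w` being the weight of the space, against a kernel which compares the weight of the
output with those of the two inputs. By Cauchy–Schwarz it is enough that the kernel is square
integrable, uniformly in one of its three frequencies; by symmetry under the exchange of the
frequencies, any of the three will do.

The square integrability is bilinear Airy smoothing: after integrating out the time frequency, the
change of variables along the cubic phase `τ - a (ξ - x)³ - a x³` has Jacobian
`3 |a| |ξ| |2 x - ξ|`.
The derivative is paid for by the resonance identity of Kenig, Ponce and Vega,
`(τ - a ξ³) - (τ₁ - a ξ₁³) - ((τ - τ₁) - a (ξ - ξ₁)³) = -3 a ξ ξ₁ (ξ - ξ₁)`: one of the three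
modulations dominates `|ξ ξ₁ (ξ - ξ₁)|`, and its frequency is the one held fixed in Cauchy–Schwarz.
-/

section WeightedConvolution

variable {E : Type*} [MeasurableSpace E] {μ : Measure E}

lemma eLpNorm_le_mul_of_le_mul {p : ℝ≥0∞} {F G : E → ℝ≥0∞} {c : NNReal} (h : ∀ z, F z ≤ c * G z) :
    eLpNorm F p μ ≤ c * eLpNorm G p μ :=
  eLpNorm_le_nnreal_smul_eLpNorm_of_ae_le_mul' (f := F) (g := G) (.of_forall h) p

lemma sq_eLpNorm_two (F : E → ℝ≥0∞) : eLpNorm F 2 μ ^ 2 = ∫⁻ z, F z ^ 2 ∂μ := by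
  simpa using eLpNorm_nnreal_pow_eq_lintegral (f := F) (μ := μ) (p := 2) two_ne_zero

lemma sq_lintegral_mul_le {F G : E → ℝ≥0∞} (hF : Measurable F) (hG : Measurable G) :
    (∫⁻ z, F z * G z ∂μ) ^ 2 ≤ (∫⁻ z, F z ^ 2 ∂μ) * ∫⁻ z, G z ^ 2 ∂μ := by
  rw [← sq_eLpNorm_two, ← sq_eLpNorm_two, ← mul_pow]
  gcongr
  simpa [eLpNorm_eq_lintegral_rpow_enorm_toReal] using
    ENNReal.lintegral_mul_le_Lp_mul_Lq μ Real.HolderConjugate.two_two hF.aemeasurable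
      hG.aemeasurable

variable [AddCommGroup E]

/-- The convolution of `F` and `G` weighted by the kernel `k`:
`z ↦ ∫ k(z, z₁) F(z₁) G(z - z₁) dμ(z₁)`. -/
noncomputable def weightedConv (μ : Measure E) (k : E → E → ℝ≥0∞) (F G : E → ℝ≥0∞) (z : E) :
    ℝ≥0∞ :=
  ∫⁻ z₁, k z z₁ * (F z₁ * G (z - z₁)) ∂μ

variable [MeasurableAdd₂ E] [MeasurableNeg E] {k : E → E → ℝ≥0∞} {F G : E → ℝ≥0∞} {M : ℝ≥0∞}

lemma measurable_weightedConv [SFinite μ] (hk : Measurable fun p : E × E => k p.1 p.2)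
    (hF : Measurable F) (hG : Measurable G) : Measurable (weightedConv μ k F G) := by
  have : Measurable fun p : E × E => k p.1 p.2 * (F p.2 * G (p.1 - p.2)) := by fun_prop
  exact this.lintegral_prod_right'

lemma weightedConv_add_left {k' : E → E → ℝ≥0∞} (hk : Measurable fun p : E × E => k p.1 p.2)
    (hF : Measurable F) (hG : Measurable G) :
    weightedConv μ (fun z z₁ => k z z₁ + k' z z₁) F G =
      weightedConv μ k F G + weightedConv μ k' F G := by
  ext z
  have : Measurable fun z₁ => k z z₁ * (F z₁ * G (z - z₁)) := by fun_prop
  simp only [weightedConv, Pi.add_apply, add_mul]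
  exact lintegral_add_left this _

variable [μ.IsAddLeftInvariant]

lemma weightedConv_comp_sub [μ.IsNegInvariant] :
    weightedConv μ (fun z z₁ => k (z - z₁) z) F G = weightedConv μ (fun z z₁ => k z₁ z) G F := by
  ext z
  rw [weightedConv, ← lintegral_sub_left_eq_self _ z]
  simp only [sub_sub_cancel, mul_comm (F _), weightedConv]

variable [SFinite μ]

lemma lintegral_lintegral_mul_sub (hF : Measurable F) (hG : Measurable G) :
    ∫⁻ z, ∫⁻ z₁, F z₁ * G (z - z₁) ∂μ ∂μ = (∫⁻ z, F z ∂μ) * ∫⁻ z, G z ∂μ := by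
  rw [lintegral_lintegral_swap (by fun_prop)]
  have inner_integral (z₁ : E) : ∫⁻ z, F z₁ * G (z - z₁) ∂μ = F z₁ * ∫⁻ z, G z ∂μ := by
    rw [lintegral_const_mul _ (by fun_prop), lintegral_sub_right_eq_self]
  simp_rw [inner_integral]
  rw [lintegral_mul_const _ hF]

lemma eLpNorm_weightedConv_le (hk : Measurable fun p : E × E => k p.1 p.2) (hF : Measurable F)
    (hG : Measurable G) (hM : ∀ z, ∫⁻ z₁, k z z₁ ^ 2 ∂μ ≤ M ^ 2) :
    eLpNorm (weightedConv μ k F G) 2 μ ≤ M * (eLpNorm F 2 μ * eLpNorm G 2 μ) := by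
  rw [← ENNReal.pow_le_pow_left_iff two_ne_zero]
  simp only [mul_pow, sq_eLpNorm_two]
  calc ∫⁻ z, weightedConv μ k F G z ^ 2 ∂μ
      ≤ ∫⁻ z, M ^ 2 * ∫⁻ z₁, F z₁ ^ 2 * G (z - z₁) ^ 2 ∂μ ∂μ := by
        gcongr with z
        refine (sq_lintegral_mul_le (by fun_prop) (by fun_prop)).trans ?_
        simp only [mul_pow]
        gcongr
        exact hM z
    _ = M ^ 2 * ∫⁻ z, ∫⁻ z₁, F z₁ ^ 2 * G (z - z₁) ^ 2 ∂μ ∂μ :=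
        lintegral_const_mul _ (Measurable.lintegral_prod_right' (f := fun p : E × E =>
          F p.2 ^ 2 * G (p.1 - p.2) ^ 2) (by fun_prop))
    _ = M ^ 2 * ((∫⁻ z, F z ^ 2 ∂μ) * ∫⁻ z, G z ^ 2 ∂μ) := by
        rw [lintegral_lintegral_mul_sub (hF.pow_const 2) (hG.pow_const 2)]

lemma eLpNorm_weightedConv_swap_le [μ.IsNegInvariant] (hk : Measurable fun p : E × E => k p.1 p.2)
    (hF : Measurable F) (hG : Measurable G) (hM : ∀ z, ∫⁻ z₁, k z z₁ ^ 2 ∂μ ≤ M ^ 2) :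
    eLpNorm (weightedConv μ (fun z z₁ => k z₁ z) F G) 2 μ ≤
      M * (eLpNorm F 2 μ * eLpNorm G 2 μ) := by
  rw [← ENNReal.pow_le_pow_left_iff two_ne_zero]
  simp only [mul_pow, sq_eLpNorm_two]
  have pointwise (z : E) : weightedConv μ (fun z z₁ => k z₁ z) F G z ^ 2 ≤
      (∫⁻ z₁, (k z₁ z * F z₁) ^ 2 ∂μ) * ∫⁻ w, G w ^ 2 ∂μ := by
    rw [weightedConv, ← lintegral_sub_left_eq_self (fun w => G w ^ 2) z]
    simp only [← mul_assoc]
    exact sq_lintegral_mul_le (by fun_prop) (by fun_prop)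
  calc ∫⁻ z, weightedConv μ (fun z z₁ => k z₁ z) F G z ^ 2 ∂μ
      ≤ (∫⁻ z, ∫⁻ z₁, (k z₁ z * F z₁) ^ 2 ∂μ ∂μ) * ∫⁻ w, G w ^ 2 ∂μ :=
        (lintegral_mono pointwise).trans_eq (lintegral_mul_const _
          (Measurable.lintegral_prod_right' (f := fun p : E × E => (k p.2 p.1 * F p.2) ^ 2)
            (by fun_prop)))
    _ = (∫⁻ z₁, (∫⁻ z, k z₁ z ^ 2 ∂μ) * F z₁ ^ 2 ∂μ) * ∫⁻ w, G w ^ 2 ∂μ := by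
        rw [lintegral_lintegral_swap (by fun_prop)]
        congr with z₁
        simp only [mul_pow]
        exact lintegral_mul_const _ (by fun_prop)
    _ ≤ (∫⁻ z₁, M ^ 2 * F z₁ ^ 2 ∂μ) * ∫⁻ w, G w ^ 2 ∂μ := by gcongr with z₁; exact hM z₁
    _ = M ^ 2 * ((∫⁻ z, F z ^ 2 ∂μ) * ∫⁻ w, G w ^ 2 ∂μ) := by
        rw [lintegral_const_mul _ (by fun_prop), mul_assoc]

lemma eLpNorm_weightedConv_add_swap_le [μ.IsNegInvariant]
    (hk : Measurable fun p : E × E => k p.1 p.2) (hF : Measurable F) (hG : Measurable G)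
    (hM : ∀ z, ∫⁻ z₁, k z z₁ ^ 2 ∂μ ≤ M ^ 2) :
    eLpNorm (weightedConv μ (fun z z₁ => k z z₁ + (k z₁ z + k (z - z₁) z)) F G) 2 μ ≤
      3 * M * (eLpNorm F 2 μ * eLpNorm G 2 μ) := by
  have hk_swap : Measurable fun p : E × E => k p.2 p.1 := by fun_prop
  have measurable_direct := measurable_weightedConv (μ := μ) hk hF hG
  have measurable_swap := measurable_weightedConv (μ := μ) (k := fun z z₁ => k z₁ z) hk_swap hF hG
  have measurable_swap' := measurable_weightedConv (μ := μ) (k := fun z z₁ => k z₁ z) hk_swap hG hF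
  rw [weightedConv_add_left hk hF hG,
    weightedConv_add_left (k := fun z z₁ => k z₁ z) hk_swap hF hG, weightedConv_comp_sub]
  calc _ ≤ M * (eLpNorm F 2 μ * eLpNorm G 2 μ) + (M * (eLpNorm F 2 μ * eLpNorm G 2 μ) +
        M * (eLpNorm G 2 μ * eLpNorm F 2 μ)) := by
        refine (eLpNorm_add_le measurable_direct.aestronglyMeasurable
          (measurable_swap.add measurable_swap').aestronglyMeasurable one_le_two).trans ?_
        gcongr
        · exact eLpNorm_weightedConv_le hk hF hG hM
        refine (eLpNorm_add_le measurable_swap.aestronglyMeasurable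
          measurable_swap'.aestronglyMeasurable one_le_two).trans ?_
        gcongr
        · exact eLpNorm_weightedConv_swap_le hk hF hG hM
        · exact eLpNorm_weightedConv_swap_le hk hG hF hM
    _ = _ := by ring

end WeightedConvolution

section BracketDecay

/-- The decaying weight `(1 + ‖x‖)^(-r)`, valued in `ℝ≥0∞`. -/
noncomputable def bracketDecay {E : Type*} [Norm E] (r : ℝ) (x : E) : ℝ≥0∞ :=
  ENNReal.ofReal ((1 + ‖x‖) ^ (-r))

variable {E : Type*} [NormedAddCommGroup E] {r : ℝ}

lemma bracketDecay_le_one (hr : 0 ≤ r) (x : E) : bracketDecay r x ≤ 1 :=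
  ENNReal.ofReal_le_one.mpr <|
    Real.rpow_le_one_of_one_le_of_nonpos (by linarith [norm_nonneg x]) (by linarith)

lemma bracketDecay_le_of_norm_le_two_mul (hr : 0 ≤ r) {x y : E} (hxy : 1 + ‖y‖ ≤ 2 * (1 + ‖x‖)) :
    bracketDecay r x ≤ ENNReal.ofReal (2 ^ r) * bracketDecay r y := by
  rw [bracketDecay, bracketDecay, ← ENNReal.ofReal_mul (by positivity)]
  refine ENNReal.ofReal_le_ofReal ?_
  calc (1 + ‖x‖) ^ (-r) ≤ (2⁻¹ * (1 + ‖y‖)) ^ (-r) :=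
        Real.rpow_le_rpow_of_nonpos (by positivity) (by linarith) (by linarith)
    _ = 2 ^ r * (1 + ‖y‖) ^ (-r) := by
        rw [Real.mul_rpow (by positivity) (by positivity), Real.rpow_neg (by positivity),
          Real.inv_rpow (by positivity), inv_inv]

lemma bracketDecay_mul_le (hr : 0 ≤ r) (x y : E) :
    bracketDecay r x * bracketDecay r y ≤
      ENNReal.ofReal (2 ^ r) * bracketDecay r (x + y) * (bracketDecay r x + bracketDecay r y) := by
  wlog h : ‖x‖ ≤ ‖y‖ generalizing x y
  · simpa only [mul_comm, add_comm] using this y x (le_of_not_ge h)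
  calc bracketDecay r x * bracketDecay r y
      ≤ bracketDecay r x * (ENNReal.ofReal (2 ^ r) * bracketDecay r (x + y)) := by
        gcongr
        exact bracketDecay_le_of_norm_le_two_mul hr (by linarith [norm_add_le x y])
    _ ≤ (bracketDecay r x + bracketDecay r y) *
          (ENNReal.ofReal (2 ^ r) * bracketDecay r (x + y)) := by gcongr; exact le_self_add
    _ = _ := mul_comm _ _

variable [MeasurableSpace E] [BorelSpace E]

@[fun_prop]
lemma measurable_bracketDecay : Measurable (bracketDecay r : E → ℝ≥0∞) := by
  unfold bracketDecay
  fun_prop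

lemma lintegral_bracketDecay_mul_le {μ : Measure E} [μ.IsAddLeftInvariant] [μ.IsNegInvariant]
    (hr : 0 ≤ r) (α β : E) :
    ∫⁻ t, bracketDecay r (t - α) * bracketDecay r (β - t) ∂μ ≤
      ENNReal.ofReal (2 ^ r) * (2 * ∫⁻ x : E, bracketDecay r x ∂μ) * bracketDecay r (β - α) := by
  have pointwise (t : E) := bracketDecay_mul_le hr (t - α) (β - t)
  simp_rw [sub_add_sub_comm, add_comm _ β, add_sub_add_right_eq_sub] at pointwise
  refine (lintegral_mono pointwise).trans_eq ?_
  rw [lintegral_const_mul _ (by fun_prop), lintegral_add_left (by fun_prop),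
    lintegral_sub_right_eq_self (bracketDecay r),
    lintegral_sub_left_eq_self (bracketDecay r)]
  ring

end BracketDecay

section ChangeOfVariables

lemma lintegral_abs_deriv_mul_comp_le {φ φ' : ℝ → ℝ} {s : Set ℝ} (hs : MeasurableSet s)
    (hφ : ∀ x, HasDerivAt φ (φ' x) x) (hinj : InjOn φ s) (hinj_compl : InjOn φ sᶜ)
    (h : ℝ → ℝ≥0∞) :
    ∫⁻ x, ENNReal.ofReal |φ' x| * h (φ x) ≤ 2 * ∫⁻ y, h y := by
  have bound_on {t : Set ℝ} (ht : MeasurableSet t) (hinj_on : InjOn φ t) :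
      ∫⁻ x in t, ENNReal.ofReal |φ' x| * h (φ x) ≤ ∫⁻ y, h y := by
    rw [← lintegral_image_eq_lintegral_abs_deriv_mul ht
      (fun x _ => (hφ x).hasDerivWithinAt) hinj_on]
    exact setLIntegral_le_lintegral _ _
  rw [← lintegral_add_compl _ hs, two_mul]
  exact add_le_add (bound_on hs hinj) (bound_on hs.compl hinj_compl)

lemma hasDerivAt_cubicPhase (a τ ξ x : ℝ) :
    HasDerivAt (fun x => τ - a * (ξ - x) ^ 3 - a * x ^ 3) (-(3 * a * (ξ * (2 * x - ξ)))) x := by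
  have deriv_cube := (hasDerivAt_pow 3 x).const_mul a
  have deriv_cube_sub := (((hasDerivAt_id x).const_sub ξ).fun_pow 3).const_mul a
  convert! (deriv_cube_sub.const_sub τ).sub deriv_cube using 1
  simp only [Nat.cast_ofNat, id_eq, Nat.add_one_sub_one, mul_neg, mul_one, neg_neg]
  ring

lemma lintegral_cubicPhase_le {a : ℝ} (ha : a ≠ 0) {h : ℝ → ℝ≥0∞} (hh : Measurable h) (τ ξ : ℝ) :
    ∫⁻ x, ENNReal.ofReal (|ξ| * |2 * x - ξ|) * h (τ - a * (ξ - x) ^ 3 - a * x ^ 3) ≤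
      ENNReal.ofReal (3 * |a|)⁻¹ * (2 * ∫⁻ y, h y) := by
  rcases eq_or_ne ξ 0 with rfl | hξ
  · simp
  have reflect_of_eq {x y : ℝ}
      (hxy : τ - a * (ξ - x) ^ 3 - a * x ^ 3 = τ - a * (ξ - y) ^ 3 - a * y ^ 3) :
      x = y ∨ x + y = ξ := by
    have : (3 * a * ξ) * ((x - y) * (x + y - ξ)) = 0 := by linarith
    simpa [ha, hξ, sub_eq_zero] using this
  have scale (x : ℝ) : ENNReal.ofReal (|ξ| * |2 * x - ξ|) = ENNReal.ofReal (3 * |a|)⁻¹ *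
      ENNReal.ofReal |(-(3 * a * (ξ * (2 * x - ξ))))| := by
    have : |a| ≠ 0 := abs_ne_zero.mpr ha
    rw [← ENNReal.ofReal_mul (by positivity), abs_neg, abs_mul, abs_mul, abs_mul,
      abs_of_pos (three_pos (α := ℝ))]
    congr 1
    field_simp
  simp_rw [scale, mul_assoc (ENNReal.ofReal (3 * |a|)⁻¹)]
  rw [lintegral_const_mul _ (by fun_prop)]
  gcongr
  refine lintegral_abs_deriv_mul_comp_le (measurableSet_Iio (a := ξ / 2))
    (hasDerivAt_cubicPhase a τ ξ) (fun x hx y hy hxy => ?_) (fun x hx y hy hxy => ?_) h <;>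
  rcases reflect_of_eq hxy with h_eq | h_reflect <;>
  simp only [mem_compl_iff, mem_Iio, not_lt] at hx hy <;>
  linarith

end ChangeOfVariables

section BilinearKernel

/-- The Fourier weight gained in the bilinear Airy smoothing estimate for two waves of frequencies
`x` and `ξ - x`, whose difference is `2 * x - ξ`. The second summand covers the region where that
difference is small. -/
noncomputable def smoothingWeight (ξ x : ℝ) : ℝ := √(|ξ| * |2 * x - ξ|) + √√|ξ|

lemma smoothingWeight_nonneg (ξ x : ℝ) : 0 ≤ smoothingWeight ξ x := by
  unfold smoothingWeight
  positivity

lemma sqrt_abs_le_of_notMem_closedBall {ξ x : ℝ}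
    (hx : x ∉ Metric.closedBall (ξ / 2) ((√|ξ|)⁻¹ / 2)) : √|ξ| ≤ |ξ| * |2 * x - ξ| := by
  rcases eq_or_ne ξ 0 with rfl | hξ
  · simp
  have sqrt_pos : 0 < √|ξ| := Real.sqrt_pos.mpr (abs_pos.mpr hξ)
  have inv_le : (√|ξ|)⁻¹ ≤ |2 * x - ξ| := by
    rw [Metric.mem_closedBall, Real.dist_eq, not_le] at hx
    rw [show 2 * x - ξ = 2 * (x - ξ / 2) by ring, abs_mul, abs_two]
    linarith
  calc √|ξ| = √|ξ| * √|ξ| * (√|ξ|)⁻¹ := by field_simp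
    _ ≤ |ξ| * |2 * x - ξ| := by rw [Real.mul_self_sqrt (abs_nonneg ξ)]; gcongr

lemma smoothingWeight_sq_le (ξ x : ℝ) :
    ENNReal.ofReal (smoothingWeight ξ x) ^ 2 ≤ 4 * ENNReal.ofReal (|ξ| * |2 * x - ξ|) +
      (Metric.closedBall (ξ / 2) ((√|ξ|)⁻¹ / 2)).indicator
        (fun _ => ENNReal.ofReal (2 * √|ξ|)) x := by
  have sq_le : smoothingWeight ξ x ^ 2 ≤ 2 * (|ξ| * |2 * x - ξ|) + 2 * √|ξ| := by
    calc smoothingWeight ξ x ^ 2 ≤ 2 * (√(|ξ| * |2 * x - ξ|) ^ 2 + √√|ξ| ^ 2) := add_sq_le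
      _ = _ := by rw [Real.sq_sqrt (by positivity), Real.sq_sqrt (by positivity)]; ring
  have product_nonneg : 0 ≤ |ξ| * |2 * x - ξ| := by positivity
  rw [← ENNReal.ofReal_pow (smoothingWeight_nonneg ξ x), ← ENNReal.ofReal_ofNat 4,
    ← ENNReal.ofReal_mul (by norm_num)]
  by_cases hx : x ∈ Metric.closedBall (ξ / 2) ((√|ξ|)⁻¹ / 2)
  · rw [indicator_of_mem hx, ← ENNReal.ofReal_add (by positivity) (by positivity)]
    exact ENNReal.ofReal_le_ofReal (by linarith)
  · rw [indicator_of_notMem hx, add_zero]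
    exact ENNReal.ofReal_le_ofReal (by linarith [sqrt_abs_le_of_notMem_closedBall hx])

lemma lintegral_indicator_closedBall_le (ξ : ℝ) :
    ∫⁻ x, (Metric.closedBall (ξ / 2) ((√|ξ|)⁻¹ / 2)).indicator
      (fun _ => ENNReal.ofReal (2 * √|ξ|)) x ≤ 2 := by
  rw [lintegral_indicator_const measurableSet_closedBall, Real.volume_closedBall,
    ← ENNReal.ofReal_mul (by positivity), ← ENNReal.ofReal_ofNat 2]
  refine ENNReal.ofReal_le_ofReal ?_
  calc 2 * √|ξ| * (2 * ((√|ξ|)⁻¹ / 2)) = 2 * (√|ξ| * (√|ξ|)⁻¹) := by ring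
    _ ≤ 2 := by linarith [mul_inv_le_one (a := √|ξ|)]

lemma lintegral_smoothingWeight_sq_mul_le {a : ℝ} (ha : a ≠ 0) {h : ℝ → ℝ≥0∞} (hh : Measurable h)
    (h_le_one : ∀ y, h y ≤ 1) (τ ξ : ℝ) :
    ∫⁻ x, ENNReal.ofReal (smoothingWeight ξ x) ^ 2 * h (τ - a * (ξ - x) ^ 3 - a * x ^ 3) ≤
      4 * (ENNReal.ofReal (3 * |a|)⁻¹ * (2 * ∫⁻ y, h y)) + 2 := by
  let ball : Set ℝ := Metric.closedBall (ξ / 2) ((√|ξ|)⁻¹ / 2)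
  have pointwise (x : ℝ) :
      ENNReal.ofReal (smoothingWeight ξ x) ^ 2 * h (τ - a * (ξ - x) ^ 3 - a * x ^ 3) ≤
        4 * (ENNReal.ofReal (|ξ| * |2 * x - ξ|) * h (τ - a * (ξ - x) ^ 3 - a * x ^ 3)) +
          ball.indicator (fun _ => ENNReal.ofReal (2 * √|ξ|)) x := by
    refine (mul_le_mul_left (smoothingWeight_sq_le ξ x) _).trans ?_
    rw [add_mul, mul_assoc]
    gcongr
    exact mul_le_of_le_one_right' (h_le_one _)
  refine (lintegral_mono pointwise).trans ?_
  rw [lintegral_add_left (by fun_prop), lintegral_const_mul _ (by fun_prop)]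
  gcongr
  · exact lintegral_cubicPhase_le ha hh τ ξ
  · exact lintegral_indicator_closedBall_le ξ

/-- The modulation `τ - a ξ³` of the space-time frequency `z = (τ, ξ)`: its distance to the
characteristic cubic. -/
def modulation (a : ℝ) (z : ℝ × ℝ) : ℝ := z.1 - a * z.2 ^ 3

/-- The kernel of the bilinear Airy smoothing estimate in `X^{0,b}`: the smoothing weight of the
interaction of `z₁` and `z - z₁`, damped by their modulations. -/
noncomputable def airyKernel (a b : ℝ) (z z₁ : ℝ × ℝ) : ℝ :=
  smoothingWeight z.2 z₁.2 *
    ((1 + |modulation a z₁|) ^ (-b) * (1 + |modulation a (z - z₁)|) ^ (-b))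

lemma airyKernel_nonneg (a b : ℝ) (z z₁ : ℝ × ℝ) : 0 ≤ airyKernel a b z z₁ := by
  have := smoothingWeight_nonneg z.2 z₁.2
  unfold airyKernel
  positivity

lemma measurable_airyKernel (a b : ℝ) :
    Measurable fun p : (ℝ × ℝ) × (ℝ × ℝ) => airyKernel a b p.1 p.2 := by
  unfold airyKernel smoothingWeight modulation
  fun_prop

lemma airyKernel_sq (a b τ ξ t x : ℝ) :
    ENNReal.ofReal (airyKernel a b (τ, ξ) (t, x)) ^ 2 =
      ENNReal.ofReal (smoothingWeight ξ x) ^ 2 * (bracketDecay (2 * b) (t - a * x ^ 3) *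
        bracketDecay (2 * b) (τ - a * (ξ - x) ^ 3 - t)) := by
  have decay_sq (y : ℝ) : ENNReal.ofReal ((1 + |y|) ^ (-b)) ^ 2 = bracketDecay (2 * b) y := by
    rw [← ENNReal.ofReal_pow (by positivity), ← Real.rpow_mul_natCast (by positivity), bracketDecay,
      Real.norm_eq_abs]
    congr 2
    push_cast
    ring
  have modulation_sub : modulation a ((τ, ξ) - (t, x)) = τ - a * (ξ - x) ^ 3 - t := by
    simp only [modulation, Prod.mk_sub_mk]
    ring
  rw [airyKernel, modulation_sub, ENNReal.ofReal_mul (smoothingWeight_nonneg _ _),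
    ENNReal.ofReal_mul (by positivity), mul_pow, mul_pow, decay_sq, decay_sq, modulation]

lemma exists_lintegral_airyKernel_sq_le {a b : ℝ} (ha : a ≠ 0) (hb : 1 / 2 < b) :
    ∃ M : ℝ≥0∞, M ≠ ⊤ ∧ ∀ z, ∫⁻ z₁, ENNReal.ofReal (airyKernel a b z z₁) ^ 2 ≤ M := by
  set J : ℝ≥0∞ := ∫⁻ x : ℝ, bracketDecay (2 * b) x
  have J_ne_top : J ≠ ⊤ := by
    refine (finite_integral_one_add_norm (E := ℝ) (μ := volume) ?_).ne
    simpa using (by linarith : 1 < 2 * b)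
  set C : ℝ≥0∞ := ENNReal.ofReal (2 ^ (2 * b)) * (2 * J)
  refine ⟨C * (4 * (ENNReal.ofReal (3 * |a|)⁻¹ * (2 * J)) + 2), by finiteness, fun ⟨τ, ξ⟩ => ?_⟩
  have inner_le (x : ℝ) : ∫⁻ t, ENNReal.ofReal (airyKernel a b (τ, ξ) (t, x)) ^ 2 ≤
      C * (ENNReal.ofReal (smoothingWeight ξ x) ^ 2 *
        bracketDecay (2 * b) (τ - a * (ξ - x) ^ 3 - a * x ^ 3)) := by
    simp_rw [airyKernel_sq]
    rw [lintegral_const_mul _ (by fun_prop), mul_left_comm]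
    gcongr
    exact lintegral_bracketDecay_mul_le (by linarith) _ _
  have measurable_kernel : Measurable fun z₁ => airyKernel a b (τ, ξ) z₁ :=
    (measurable_airyKernel a b).comp measurable_prodMk_left
  rw [Measure.volume_eq_prod, lintegral_prod_symm' _ (by fun_prop)]
  refine (lintegral_mono inner_le).trans ?_
  rw [lintegral_const_mul' _ _ (by finiteness)]
  gcongr
  exact lintegral_smoothingWeight_sq_mul_le ha measurable_bracketDecay
    (bracketDecay_le_one (by linarith)) τ ξ

end BilinearKernel

section FrequencyMultiplier

/-- The multiplier on space frequencies `ξ₁ + (ξ - ξ₁) = ξ` of Kenig, Ponce and Vega, for the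
estimate of `∂ₓ(fg)` at Sobolev regularity `-ρ`. -/
noncomputable def freqMultiplier (ρ ξ ξ₁ : ℝ) : ℝ :=
  |ξ| * (1 + |ξ|) ^ (-ρ) * ((1 + |ξ₁|) * (1 + |ξ - ξ₁|)) ^ ρ

/-- Up to the factor `3 * a`, the size of the resonance function
`a ξ³ - a ξ₁³ - a (ξ - ξ₁)³ = 3 a ξ ξ₁ (ξ - ξ₁)`. -/
def resonance (ξ ξ₁ : ℝ) : ℝ := |ξ| * (|ξ₁| * |ξ - ξ₁|)

variable {θ ρ ξ ξ₁ : ℝ}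

lemma freqMultiplier_nonneg : 0 ≤ freqMultiplier ρ ξ ξ₁ := by
  unfold freqMultiplier
  positivity

lemma resonance_nonneg : 0 ≤ resonance ξ ξ₁ := by
  unfold resonance
  positivity

lemma freqMultiplier_sub_right : freqMultiplier ρ ξ (ξ - ξ₁) = freqMultiplier ρ ξ ξ₁ := by
  rw [freqMultiplier, freqMultiplier, sub_sub_cancel, mul_comm (1 + |ξ - ξ₁|)]

lemma resonance_sub_right : resonance ξ (ξ - ξ₁) = resonance ξ ξ₁ := by
  rw [resonance, resonance, sub_sub_cancel, mul_comm |ξ - ξ₁|]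

lemma mul_one_add_rpow_neg_le {x κ : ℝ} (hx : 0 < x) (hκ : 0 ≤ κ) (hκρ : κ ≤ ρ) :
    x * (1 + x) ^ (-ρ) ≤ x ^ (1 - κ) := by
  calc x * (1 + x) ^ (-ρ) ≤ x * (1 + x) ^ (-κ) := by
        gcongr
        linarith
    _ ≤ x * x ^ (-κ) := by
        gcongr ?_ * ?_
        exact Real.rpow_le_rpow_of_nonpos hx (by linarith) (by linarith)
    _ = x ^ (1 - κ) := by rw [sub_eq_add_neg, Real.rpow_add hx, Real.rpow_one]

lemma one_add_mul_one_add_rpow_le {x y : ℝ} (hx : 1 ≤ x) (hy : 1 ≤ y) (hρ : 0 ≤ ρ) (hρ' : ρ ≤ 1) :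
    ((1 + x) * (1 + y)) ^ ρ ≤ 4 * (x * y) ^ ρ := by
  calc ((1 + x) * (1 + y)) ^ ρ ≤ (4 * (x * y)) ^ ρ := by gcongr ?_ ^ ρ; nlinarith
    _ = 4 ^ ρ * (x * y) ^ ρ := Real.mul_rpow (by norm_num) (by positivity)
    _ ≤ 4 * (x * y) ^ ρ := by
        gcongr
        exact Real.rpow_le_self_of_one_le (by norm_num) hρ'

lemma freqMultiplier_le_resonance_rpow {e : ℝ} (hρ : 0 ≤ ρ) (hρ' : ρ ≤ 1) (he : 1 - θ - ρ ≤ e)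
    (he' : e ≤ 1 - θ) (h₁ : 1 ≤ |ξ₁|) (h₂ : 1 ≤ |ξ - ξ₁|) :
    freqMultiplier ρ ξ ξ₁ ≤
      4 * (resonance ξ ξ₁ ^ θ * (|ξ| ^ e * (|ξ₁| * |ξ - ξ₁|) ^ (ρ - θ))) := by
  rcases eq_or_ne ξ 0 with rfl | hξ
  · rw [freqMultiplier, abs_zero, zero_mul, zero_mul]
    have := resonance_nonneg (ξ := 0) (ξ₁ := ξ₁)
    positivity
  have ξ_pos : 0 < |ξ| := abs_pos.mpr hξ
  have product_pos : 0 < |ξ₁| * |ξ - ξ₁| := by positivity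
  calc freqMultiplier ρ ξ ξ₁
      ≤ |ξ| ^ (1 - (1 - θ - e)) * (4 * (|ξ₁| * |ξ - ξ₁|) ^ ρ) := by
        rw [freqMultiplier]
        gcongr
        · exact mul_one_add_rpow_neg_le ξ_pos (by linarith) (by linarith)
        · exact one_add_mul_one_add_rpow_le h₁ h₂ hρ hρ'
    _ = |ξ| ^ (θ + e) * (4 * (|ξ₁| * |ξ - ξ₁|) ^ (θ + (ρ - θ))) := by ring_nf
    _ = _ := by
        rw [Real.rpow_add ξ_pos, Real.rpow_add product_pos, resonance,
          Real.mul_rpow ξ_pos.le product_pos.le]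
        ring

lemma freqMultiplier_le_of_output_separated (hθ : θ ≤ 1 / 2) (hρ : 1 - θ ≤ ρ)
    (hρ' : ρ ≤ 3 * θ - 3 / 4) (h₁ : 1 ≤ |ξ₁|) (h₂ : 1 ≤ |ξ - ξ₁|) (hD₁ : |ξ₁| ≤ 4 * |2 * ξ₁ - ξ|)
    (hD₂ : |ξ - ξ₁| ≤ 4 * |2 * ξ₁ - ξ|) :
    freqMultiplier ρ ξ ξ₁ ≤ 8 * (resonance ξ ξ₁ ^ θ * √(|ξ| * |2 * ξ₁ - ξ|)) := by
  have product_rpow_le : (|ξ₁| * |ξ - ξ₁|) ^ (ρ - θ) ≤ 2 * √|2 * ξ₁ - ξ| := by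
    calc (|ξ₁| * |ξ - ξ₁|) ^ (ρ - θ) ≤ (|ξ₁| * |ξ - ξ₁|) ^ (1 / 4 : ℝ) := by
          gcongr
          · exact one_le_mul_of_one_le_of_one_le h₁ h₂
          · linarith
      _ ≤ ((4 * |2 * ξ₁ - ξ|) * (4 * |2 * ξ₁ - ξ|)) ^ (1 / 4 : ℝ) := by gcongr
      _ = √(4 * |2 * ξ₁ - ξ|) := by
          rw [← sq, ← Real.rpow_natCast_mul (by positivity), Real.sqrt_eq_rpow]
          norm_num
      _ = 2 * √|2 * ξ₁ - ξ| := by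
          rw [Real.sqrt_mul (by norm_num), show (4 : ℝ) = 2 ^ 2 by norm_num,
            Real.sqrt_sq (by norm_num)]
  have := resonance_nonneg (ξ := ξ) (ξ₁ := ξ₁)
  calc freqMultiplier ρ ξ ξ₁
      ≤ 4 * (resonance ξ ξ₁ ^ θ * (|ξ| ^ (1 / 2 : ℝ) * (|ξ₁| * |ξ - ξ₁|) ^ (ρ - θ))) :=
        freqMultiplier_le_resonance_rpow (by linarith) (by linarith) (by linarith) (by linarith)
          h₁ h₂
    _ ≤ 4 * (resonance ξ ξ₁ ^ θ * (|ξ| ^ (1 / 2 : ℝ) * (2 * √|2 * ξ₁ - ξ|))) := by gcongr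
    _ = 8 * (resonance ξ ξ₁ ^ θ * √(|ξ| * |2 * ξ₁ - ξ|)) := by
        rw [← Real.sqrt_eq_rpow, Real.sqrt_mul (abs_nonneg ξ)]
        ring

lemma freqMultiplier_le_of_input_separated (hθ : θ ≤ 1 / 2) (hρ : 1 - θ ≤ ρ)
    (hρ' : ρ ≤ 3 * θ - 3 / 4) (h₁ : 1 ≤ |ξ₁|) (h₂ : 1 ≤ |ξ - ξ₁|)
    (hD : |ξ - ξ₁| ≤ 4 * |2 * ξ - ξ₁|) :
    freqMultiplier ρ ξ ξ₁ ≤ 8 * (resonance ξ ξ₁ ^ θ * √(|ξ₁| * |2 * ξ - ξ₁|)) := by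
  have product_rpow_le : (|ξ₁| * |ξ - ξ₁|) ^ (ρ - θ) ≤ 2 * √(|ξ₁| * |2 * ξ - ξ₁|) := by
    calc (|ξ₁| * |ξ - ξ₁|) ^ (ρ - θ) ≤ (|ξ₁| * |ξ - ξ₁|) ^ (1 / 2 : ℝ) := by
          gcongr
          · exact one_le_mul_of_one_le_of_one_le h₁ h₂
          · linarith
      _ ≤ (|ξ₁| * (4 * |2 * ξ - ξ₁|)) ^ (1 / 2 : ℝ) := by gcongr
      _ = √(2 ^ 2 * (|ξ₁| * |2 * ξ - ξ₁|)) := by rw [Real.sqrt_eq_rpow]; ring_nf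
      _ = 2 * √(|ξ₁| * |2 * ξ - ξ₁|) := by
          rw [Real.sqrt_mul (by norm_num), Real.sqrt_sq (by norm_num)]
  have := resonance_nonneg (ξ := ξ) (ξ₁ := ξ₁)
  calc freqMultiplier ρ ξ ξ₁
      ≤ 4 * (resonance ξ ξ₁ ^ θ * (|ξ| ^ (0 : ℝ) * (|ξ₁| * |ξ - ξ₁|) ^ (ρ - θ))) :=
        freqMultiplier_le_resonance_rpow (by linarith) (by linarith) (by linarith) (by linarith)
          h₁ h₂
    _ ≤ 4 * (resonance ξ ξ₁ ^ θ * (|ξ| ^ (0 : ℝ) * (2 * √(|ξ₁| * |2 * ξ - ξ₁|)))) := by gcongr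
    _ = 8 * (resonance ξ ξ₁ ^ θ * √(|ξ₁| * |2 * ξ - ξ₁|)) := by rw [Real.rpow_zero]; ring

lemma rpow_le_two_mul_rpow_of_le_four_mul {x N κ : ℝ} (hN : 0 < N) (hNx : N ≤ 4 * x)
    (hκ : κ ≤ 0) (hκ' : -(1 / 2) ≤ κ) : x ^ κ ≤ 2 * N ^ κ := by
  calc x ^ κ ≤ (4⁻¹ * N) ^ κ :=
        Real.rpow_le_rpow_of_nonpos (by positivity) (by linarith) hκ
    _ = 4 ^ (-κ) * N ^ κ := by
        rw [Real.mul_rpow (by norm_num) hN.le, Real.inv_rpow (by norm_num),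
          ← Real.rpow_neg (by norm_num)]
    _ ≤ 4 ^ (1 / 2 : ℝ) * N ^ κ := by
        gcongr
        · norm_num
        · linarith
    _ = 2 * N ^ κ := by
        rw [← Real.sqrt_eq_rpow, show (4 : ℝ) = 2 ^ 2 by norm_num, Real.sqrt_sq (by norm_num)]

lemma rpow_le_two_mul_sqrt_sqrt {N y κ : ℝ} (hN : 1 ≤ N) (hκ : κ ≤ 1 / 4) (hNy : N ≤ 16 * y) :
    N ^ κ ≤ 2 * √√y := by
  calc N ^ κ ≤ N ^ (1 / 4 : ℝ) := Real.rpow_le_rpow_of_exponent_le hN hκ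
    _ = √√N := by
        rw [Real.sqrt_eq_rpow, Real.sqrt_eq_rpow, ← Real.rpow_mul (by linarith)]
        norm_num
    _ ≤ √√((2 ^ 2) ^ 2 * y) := by
        gcongr
        linarith
    _ = 2 * √√y := by
        rw [Real.sqrt_mul (by norm_num), Real.sqrt_sq (by norm_num), Real.sqrt_mul (by norm_num),
          Real.sqrt_sq (by norm_num)]

/- At frequencies of size `N` the claim is `N ^ (1 + ρ) ≤ N ^ (3 * θ) * N ^ (1 / 4)`. With
`θ = 1 / 2` this is where the threshold `-ρ ≥ -3 / 4` for the Sobolev regularity comes from. -/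
lemma freqMultiplier_le_of_comparable {N y : ℝ} (hθ : θ ≤ 1 / 2) (hρ : 1 - θ ≤ ρ)
    (hρ' : ρ ≤ 3 * θ - 3 / 4) (h₁ : 1 ≤ |ξ₁|) (h₂ : 1 ≤ |ξ - ξ₁|) (h₁N : |ξ₁| ≤ N)
    (h₂N : |ξ - ξ₁| ≤ N) (hξN : N ≤ 4 * |ξ|) (hyN : N ≤ 16 * y) :
    freqMultiplier ρ ξ ξ₁ ≤ 16 * (resonance ξ ξ₁ ^ θ * √√y) := by
  have one_le_N : 1 ≤ N := h₁.trans h₁N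
  have N_pos : 0 < N := by linarith
  have output_rpow_le : |ξ| ^ (1 - θ - ρ) ≤ 2 * N ^ (1 - θ - ρ) :=
    rpow_le_two_mul_rpow_of_le_four_mul N_pos hξN (by linarith) (by linarith)
  have := resonance_nonneg (ξ := ξ) (ξ₁ := ξ₁)
  calc freqMultiplier ρ ξ ξ₁
      ≤ 4 * (resonance ξ ξ₁ ^ θ * (|ξ| ^ (1 - θ - ρ) * (|ξ₁| * |ξ - ξ₁|) ^ (ρ - θ))) :=
        freqMultiplier_le_resonance_rpow (by linarith) (by linarith) le_rfl (by linarith) h₁ h₂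
    _ ≤ 4 * (resonance ξ ξ₁ ^ θ * (2 * N ^ (1 - θ - ρ) * (N * N) ^ (ρ - θ))) := by
        gcongr
        linarith
    _ = 8 * (resonance ξ ξ₁ ^ θ * N ^ (1 + ρ - 3 * θ)) := by
        rw [Real.mul_rpow N_pos.le N_pos.le,
          show 1 + ρ - 3 * θ = 1 - θ - ρ + (ρ - θ) + (ρ - θ) by ring, Real.rpow_add N_pos,
          Real.rpow_add N_pos]
        ring
    _ ≤ 8 * (resonance ξ ξ₁ ^ θ * (2 * √√y)) := by
        gcongr
        exact rpow_le_two_mul_sqrt_sqrt one_le_N (by linarith) hyN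
    _ = 16 * (resonance ξ ξ₁ ^ θ * √√y) := by ring

lemma freqMultiplier_le_smoothingWeight_output (hθ : θ ≤ 1 / 2) (hρ : 1 - θ ≤ ρ)
    (hρ' : ρ ≤ 3 * θ - 3 / 4) (h₁ : 1 ≤ |ξ₁|) (h₂ : 1 ≤ |ξ - ξ₁|) :
    freqMultiplier ρ ξ ξ₁ ≤ 16 * (resonance ξ ξ₁ ^ θ * smoothingWeight ξ ξ₁) := by
  have resonance_rpow_nonneg : 0 ≤ resonance ξ ξ₁ ^ θ := Real.rpow_nonneg resonance_nonneg θ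
  by_cases separated : max |ξ₁| |ξ - ξ₁| ≤ 4 * |2 * ξ₁ - ξ|
  · refine (freqMultiplier_le_of_output_separated hθ hρ hρ' h₁ h₂
      ((le_max_left _ _).trans separated) ((le_max_right _ _).trans separated)).trans ?_
    rw [smoothingWeight]
    nlinarith [Real.sqrt_nonneg (|ξ| * |2 * ξ₁ - ξ|), Real.sqrt_nonneg √|ξ|]
  · rw [not_le] at separated
    have max_le_output : max |ξ₁| |ξ - ξ₁| ≤ 4 * |ξ| := by
      have first_le := abs_sub_abs_le_abs_sub (2 * ξ₁) ξ
      have second_le := abs_sub_abs_le_abs_sub (2 * (ξ - ξ₁)) ξ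
      rw [show 2 * (ξ - ξ₁) - ξ = -(2 * ξ₁ - ξ) by ring, abs_neg, abs_mul, abs_two] at second_le
      rw [abs_mul, abs_two] at first_le
      rcases max_cases |ξ₁| |ξ - ξ₁| with ⟨h, _⟩ | ⟨h, _⟩ <;> rw [h] at separated ⊢ <;> linarith
    refine (freqMultiplier_le_of_comparable hθ hρ hρ' h₁ h₂ (le_max_left _ _) (le_max_right _ _)
      max_le_output (max_le_output.trans (by linarith [abs_nonneg ξ]))).trans ?_
    rw [smoothingWeight]
    gcongr
    exact le_add_of_nonneg_left (Real.sqrt_nonneg _)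

lemma freqMultiplier_le_smoothingWeight_input (hθ : θ ≤ 1 / 2) (hρ : 1 - θ ≤ ρ)
    (hρ' : ρ ≤ 3 * θ - 3 / 4) (h₁ : 1 ≤ |ξ₁|) (h₂ : 1 ≤ |ξ - ξ₁|) :
    freqMultiplier ρ ξ ξ₁ ≤ 16 * (resonance ξ ξ₁ ^ θ * smoothingWeight ξ₁ ξ) := by
  have resonance_rpow_nonneg : 0 ≤ resonance ξ ξ₁ ^ θ := Real.rpow_nonneg resonance_nonneg θ
  by_cases separated : |ξ - ξ₁| ≤ 4 * |2 * ξ - ξ₁|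
  · refine (freqMultiplier_le_of_input_separated hθ hρ hρ' h₁ h₂ separated).trans ?_
    rw [smoothingWeight]
    nlinarith [Real.sqrt_nonneg (|ξ₁| * |2 * ξ - ξ₁|), Real.sqrt_nonneg √|ξ₁|]
  · rw [not_le] at separated
    have other_le : |ξ - ξ₁| ≤ |ξ₁| := by
      have := abs_sub (2 * ξ - ξ₁) ξ₁
      rw [show 2 * ξ - ξ₁ - ξ₁ = 2 * (ξ - ξ₁) by ring, abs_mul, abs_two] at this
      linarith
    have input_le_output : |ξ₁| ≤ 4 * |ξ| := by
      have := abs_sub_abs_le_abs_sub ξ₁ (2 * ξ)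
      rw [abs_sub_comm, abs_mul, abs_two] at this
      linarith
    refine (freqMultiplier_le_of_comparable hθ hρ hρ' h₁ h₂ le_rfl other_le input_le_output
      (y := |ξ₁|) (by linarith)).trans ?_
    rw [smoothingWeight]
    gcongr
    exact le_add_of_nonneg_left (Real.sqrt_nonneg _)

lemma abs_le_smoothingWeight_of_small_input (h : |ξ₁| ≤ 1 ∨ |ξ - ξ₁| ≤ 1) :
    |ξ| ≤ 4 * smoothingWeight ξ ξ₁ := by
  rw [smoothingWeight]
  rcases le_total |ξ| 4 with hξ | hξ
  · have sqrt_le : √|ξ| ≤ 2 := Real.sqrt_le_iff.mpr ⟨by norm_num, by linarith⟩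
    have sqrt_sqrt_le : √√|ξ| ≤ 2 := Real.sqrt_le_iff.mpr ⟨by norm_num, by linarith⟩
    calc |ξ| = √|ξ| * (√√|ξ| * √√|ξ|) := by
          rw [Real.mul_self_sqrt (Real.sqrt_nonneg _), Real.mul_self_sqrt (abs_nonneg ξ)]
      _ ≤ 2 * (2 * √√|ξ|) := by gcongr
      _ ≤ 4 * (√(|ξ| * |2 * ξ₁ - ξ|) + √√|ξ|) := by
          linarith [Real.sqrt_nonneg (|ξ| * |2 * ξ₁ - ξ|)]
  · have difference_ge : |ξ| ≤ 2 * |2 * ξ₁ - ξ| := by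
      rcases h with h | h
      · have := abs_sub (2 * ξ₁) (2 * ξ₁ - ξ)
        rw [sub_sub_cancel, abs_mul, abs_two] at this
        linarith
      · have := abs_sub_abs_le_abs_sub ξ (2 * (ξ - ξ₁))
        rw [show ξ - 2 * (ξ - ξ₁) = 2 * ξ₁ - ξ by ring, abs_mul, abs_two] at this
        linarith
    have half_abs_le_sqrt : |ξ| / 2 ≤ √(|ξ| * |2 * ξ₁ - ξ|) :=
      Real.le_sqrt_of_sq_le (by nlinarith)
    linarith [Real.sqrt_nonneg √|ξ|, Real.sqrt_nonneg (|ξ| * |2 * ξ₁ - ξ|)]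

lemma freqMultiplier_le_of_small_input (hρ : 0 ≤ ρ) (hρ' : ρ ≤ 1)
    (h : |ξ₁| ≤ 1 ∨ |ξ - ξ₁| ≤ 1) : freqMultiplier ρ ξ ξ₁ ≤ 16 * smoothingWeight ξ ξ₁ := by
  have inputs_le : (1 + |ξ₁|) * (1 + |ξ - ξ₁|) ≤ 4 * (1 + |ξ|) := by
    rcases h with h | h
    · nlinarith [abs_sub ξ ξ₁, abs_nonneg ξ, abs_nonneg (ξ - ξ₁)]
    · have := abs_sub ξ (ξ - ξ₁)
      rw [sub_sub_cancel] at this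
      nlinarith [abs_nonneg ξ, abs_nonneg ξ₁]
  calc freqMultiplier ρ ξ ξ₁ ≤ |ξ| * (1 + |ξ|) ^ (-ρ) * (4 * (1 + |ξ|)) ^ ρ := by
        rw [freqMultiplier]
        gcongr
    _ = |ξ| * 4 ^ ρ := by
        rw [Real.mul_rpow (by norm_num) (by positivity), Real.rpow_neg (by positivity)]
        have : (1 + |ξ|) ^ ρ ≠ 0 := by positivity
        field_simp
    _ ≤ (4 * smoothingWeight ξ ξ₁) * 4 := by
        gcongr
        · linarith [smoothingWeight_nonneg ξ ξ₁]
        · exact abs_le_smoothingWeight_of_small_input h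
        · exact Real.rpow_le_self_of_one_le (by norm_num) hρ'
    _ = 16 * smoothingWeight ξ ξ₁ := by ring

end FrequencyMultiplier

section TrilinearBound

variable {θ b c m P W S T S₀ S₁ S₂ W₀ W₁ W₂ : ℝ}

lemma rpow_mul_rpow_neg_le_inv (hP : 0 ≤ P) (hc : 0 < c) (hc' : c ≤ 1) (hS : 0 < S)
    (hPS : c * P ≤ S) (hθ : 0 ≤ θ) (hθ' : θ ≤ 1) : P ^ θ * S ^ (-θ) ≤ c⁻¹ := by
  calc P ^ θ * S ^ (-θ) = (P / S) ^ θ := by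
        rw [Real.div_rpow hP hS.le, Real.rpow_neg hS.le, div_eq_mul_inv]
    _ ≤ (c⁻¹) ^ θ := by
        gcongr
        rw [div_le_iff₀ hS, inv_mul_eq_div, le_div_iff₀ hc]
        linarith
    _ ≤ c⁻¹ := Real.rpow_le_self_of_one_le (one_le_inv₀ hc |>.mpr hc') hθ'

lemma rpow_neg_mul_rpow_neg_le_swap (hS : 0 < S) (hST : S ≤ T) (hθb : θ ≤ b) :
    S ^ (-θ) * T ^ (-b) ≤ S ^ (-b) * T ^ (-θ) := by
  have hT : 0 < T := hS.trans_le hST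
  calc S ^ (-θ) * T ^ (-b) = S ^ (b - θ) * S ^ (-b) * T ^ (-b) := by
        rw [← Real.rpow_add hS]
        ring_nf
    _ ≤ T ^ (b - θ) * S ^ (-b) * T ^ (-b) := by gcongr
    _ = S ^ (-b) * T ^ (-θ) := by
        rw [mul_right_comm, ← Real.rpow_add hT, mul_comm]
        ring_nf

lemma mul_rpow_neg_le_of_mul_le (hm : m ≤ P ^ θ * W) (hP : 0 ≤ P) (hW : 0 ≤ W) (hc : 0 < c)
    (hc' : c ≤ 1) (hS : 0 < S) (hPS : c * P ≤ S) (hθ : 0 ≤ θ) (hθ' : θ ≤ 1) :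
    m * S ^ (-θ) ≤ c⁻¹ * W := by
  calc m * S ^ (-θ) ≤ P ^ θ * W * S ^ (-θ) := by gcongr
    _ = P ^ θ * S ^ (-θ) * W := mul_right_comm _ _ _
    _ ≤ c⁻¹ * W := by
        gcongr
        exact rpow_mul_rpow_neg_le_inv hP hc hc' hS hPS hθ hθ'

/- The largest of `S₀`, `S₁`, `S₂` absorbs `P ^ θ`; it takes over the exponent `θ` from `S₀`. -/
lemma mul_rpow_neg_le_sum_of_le_max (hm : 0 ≤ m) (hm₀ : m ≤ P ^ θ * W₀) (hm₁ : m ≤ P ^ θ * W₁)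
    (hm₂ : m ≤ P ^ θ * W₂) (hW₀ : 0 ≤ W₀) (hW₁ : 0 ≤ W₁) (hW₂ : 0 ≤ W₂) (hP : 0 ≤ P) (hc : 0 < c)
    (hc' : c ≤ 1) (hS₀ : 0 < S₀) (hS₁ : 0 < S₁) (hS₂ : 0 < S₂)
    (hPS : c * P ≤ max S₀ (max S₁ S₂)) (hθ : 0 ≤ θ) (hθ' : θ ≤ 1) (hθb : θ ≤ b) :
    m * (S₀ ^ (-θ) * (S₁ ^ (-b) * S₂ ^ (-b))) ≤
      c⁻¹ * (W₀ * (S₁ ^ (-b) * S₂ ^ (-b)) +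
        (W₁ * (S₀ ^ (-b) * S₂ ^ (-b)) + W₂ * (S₀ ^ (-b) * S₁ ^ (-b)))) := by
  have term₀_nonneg : 0 ≤ c⁻¹ * (W₀ * (S₁ ^ (-b) * S₂ ^ (-b))) := by positivity
  have term₁_nonneg : 0 ≤ c⁻¹ * (W₁ * (S₀ ^ (-b) * S₂ ^ (-b))) := by positivity
  have term₂_nonneg : 0 ≤ c⁻¹ * (W₂ * (S₀ ^ (-b) * S₁ ^ (-b))) := by positivity
  rw [mul_add, mul_add]
  by_cases hPS₀ : c * P ≤ S₀
  · have gain := mul_rpow_neg_le_of_mul_le hm₀ hP hW₀ hc hc' hS₀ hPS₀ hθ hθ'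
    calc m * (S₀ ^ (-θ) * (S₁ ^ (-b) * S₂ ^ (-b)))
        = m * S₀ ^ (-θ) * (S₁ ^ (-b) * S₂ ^ (-b)) := by ring
      _ ≤ c⁻¹ * W₀ * (S₁ ^ (-b) * S₂ ^ (-b)) := by gcongr
      _ ≤ _ := by linarith
  · rcases le_max_iff.mp (le_max_iff.mp hPS |>.resolve_left hPS₀) with hPS₁ | hPS₂
    · have gain := mul_rpow_neg_le_of_mul_le hm₁ hP hW₁ hc hc' hS₁ hPS₁ hθ hθ'
      have swap := rpow_neg_mul_rpow_neg_le_swap hS₀ (by linarith : S₀ ≤ S₁) hθb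
      calc m * (S₀ ^ (-θ) * (S₁ ^ (-b) * S₂ ^ (-b)))
          = m * (S₀ ^ (-θ) * S₁ ^ (-b)) * S₂ ^ (-b) := by ring
        _ ≤ m * (S₀ ^ (-b) * S₁ ^ (-θ)) * S₂ ^ (-b) := by gcongr
        _ = m * S₁ ^ (-θ) * (S₀ ^ (-b) * S₂ ^ (-b)) := by ring
        _ ≤ c⁻¹ * W₁ * (S₀ ^ (-b) * S₂ ^ (-b)) := by gcongr
        _ ≤ _ := by linarith
    · have gain := mul_rpow_neg_le_of_mul_le hm₂ hP hW₂ hc hc' hS₂ hPS₂ hθ hθ'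
      have swap := rpow_neg_mul_rpow_neg_le_swap hS₀ (by linarith : S₀ ≤ S₂) hθb
      calc m * (S₀ ^ (-θ) * (S₁ ^ (-b) * S₂ ^ (-b)))
          = m * (S₀ ^ (-θ) * S₂ ^ (-b)) * S₁ ^ (-b) := by ring
        _ ≤ m * (S₀ ^ (-b) * S₂ ^ (-θ)) * S₁ ^ (-b) := by gcongr
        _ = m * S₂ ^ (-θ) * (S₀ ^ (-b) * S₁ ^ (-b)) := by ring
        _ ≤ c⁻¹ * W₂ * (S₀ ^ (-b) * S₁ ^ (-b)) := by gcongr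
        _ ≤ _ := by linarith

end TrilinearBound

section Interaction

variable {a b θ ρ : ℝ} (z z₁ : ℝ × ℝ)

lemma abs_modulation_neg : |modulation a (-z)| = |modulation a z| := by
  rw [← abs_neg, modulation, modulation, Prod.fst_neg, Prod.snd_neg]
  ring_nf

lemma modulation_sub_sub :
    modulation a z - modulation a z₁ - modulation a (z - z₁) =
      -(3 * (a * (z.2 * (z₁.2 * (z.2 - z₁.2))))) := by
  simp only [modulation, Prod.fst_sub, Prod.snd_sub]
  ring

lemma abs_mul_resonance_le_max :
    |a| * resonance z.2 z₁.2 ≤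
      max |modulation a z| (max |modulation a z₁| |modulation a (z - z₁)|) := by
  have resonance_identity : 3 * (|a| * resonance z.2 z₁.2) =
      |modulation a z - modulation a z₁ - modulation a (z - z₁)| := by
    rw [modulation_sub_sub, abs_neg, resonance, ← abs_mul, ← abs_mul, ← abs_mul, abs_mul 3,
      abs_of_pos (three_pos (α := ℝ))]
  have triangle := (abs_sub (modulation a z - modulation a z₁) (modulation a (z - z₁))).trans
    (add_le_add_left (abs_sub (modulation a z) (modulation a z₁)) _)
  grind

lemma min_one_mul_resonance_le_max :
    min 1 |a| * resonance z.2 z₁.2 ≤ max (1 + |modulation a z|)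
      (max (1 + |modulation a z₁|) (1 + |modulation a (z - z₁)|)) := by
  calc min 1 |a| * resonance z.2 z₁.2 ≤ |a| * resonance z.2 z₁.2 := by
        gcongr
        · exact resonance_nonneg
        · exact min_le_right _ _
    _ ≤ _ := (abs_mul_resonance_le_max z z₁).trans (by gcongr <;> linarith)

/-- The three kernels `airyKernel` of an interaction `z₁ + (z - z₁) = z`: one for each of the three
frequencies in the role of the output. -/
noncomputable def interactionKernel (a b : ℝ) (z z₁ : ℝ × ℝ) : ℝ :=
  airyKernel a b z z₁ + (airyKernel a b z₁ z + airyKernel a b (z - z₁) z)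

lemma interactionKernel_eq :
    interactionKernel a b z z₁ =
      smoothingWeight z.2 z₁.2 *
        ((1 + |modulation a z₁|) ^ (-b) * (1 + |modulation a (z - z₁)|) ^ (-b)) +
      (smoothingWeight z₁.2 z.2 *
        ((1 + |modulation a z|) ^ (-b) * (1 + |modulation a (z - z₁)|) ^ (-b)) +
      smoothingWeight (z.2 - z₁.2) z.2 *
        ((1 + |modulation a z|) ^ (-b) * (1 + |modulation a z₁|) ^ (-b))) := by
  rw [interactionKernel, airyKernel, airyKernel, airyKernel, sub_sub_cancel_left,
    abs_modulation_neg, ← neg_sub z z₁, abs_modulation_neg, Prod.snd_sub]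

lemma airyKernel_le_interactionKernel : airyKernel a b z z₁ ≤ interactionKernel a b z z₁ :=
  le_add_of_nonneg_right (add_nonneg (airyKernel_nonneg ..) (airyKernel_nonneg ..))

lemma interactionKernel_nonneg : 0 ≤ interactionKernel a b z z₁ :=
  (airyKernel_nonneg ..).trans (airyKernel_le_interactionKernel z z₁)

lemma freqMultiplier_mul_le_interactionKernel_of_small_input (hθ : 0 ≤ θ) (hρ : 0 ≤ ρ) (hρ' : ρ ≤ 1)
    (h : |z₁.2| ≤ 1 ∨ |z.2 - z₁.2| ≤ 1) :
    freqMultiplier ρ z.2 z₁.2 * ((1 + |modulation a z|) ^ (-θ) *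
      ((1 + |modulation a z₁|) ^ (-b) * (1 + |modulation a (z - z₁)|) ^ (-b))) ≤
        16 * interactionKernel a b z z₁ := by
  have output_weight_le : (1 + |modulation a z|) ^ (-θ) ≤ 1 :=
    Real.rpow_le_one_of_one_le_of_nonpos (by simp) (by linarith)
  have := smoothingWeight_nonneg z.2 z₁.2
  calc _ ≤ 16 * smoothingWeight z.2 z₁.2 * (1 *
          ((1 + |modulation a z₁|) ^ (-b) * (1 + |modulation a (z - z₁)|) ^ (-b))) := by
        gcongr
        exact freqMultiplier_le_of_small_input hρ hρ' h
    _ = 16 * airyKernel a b z z₁ := by rw [airyKernel]; ring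
    _ ≤ 16 * interactionKernel a b z z₁ := by
        gcongr
        exact airyKernel_le_interactionKernel z z₁

lemma freqMultiplier_mul_le_interactionKernel_of_large_inputs (ha : a ≠ 0) (hθ : θ ≤ 1 / 2)
    (hρ : 1 - θ ≤ ρ) (hρ' : ρ ≤ 3 * θ - 3 / 4) (hθb : θ ≤ b) (h₁ : 1 ≤ |z₁.2|)
    (h₂ : 1 ≤ |z.2 - z₁.2|) :
    freqMultiplier ρ z.2 z₁.2 * ((1 + |modulation a z|) ^ (-θ) *
      ((1 + |modulation a z₁|) ^ (-b) * (1 + |modulation a (z - z₁)|) ^ (-b))) ≤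
        (min 1 |a|)⁻¹ * (16 * interactionKernel a b z z₁) := by
  have second_input : freqMultiplier ρ z.2 z₁.2 ≤
      16 * (resonance z.2 z₁.2 ^ θ * smoothingWeight (z.2 - z₁.2) z.2) := by
    rw [← freqMultiplier_sub_right, ← resonance_sub_right]
    exact freqMultiplier_le_smoothingWeight_input hθ hρ hρ' h₂ (by rwa [sub_sub_cancel])
  have weight_nonneg (ξ x : ℝ) : 0 ≤ 16 * smoothingWeight ξ x :=
    mul_nonneg (by norm_num) (smoothingWeight_nonneg ξ x)
  refine (mul_rpow_neg_le_sum_of_le_max freqMultiplier_nonneg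
    ((freqMultiplier_le_smoothingWeight_output hθ hρ hρ' h₁ h₂).trans_eq (mul_left_comm ..))
    ((freqMultiplier_le_smoothingWeight_input hθ hρ hρ' h₁ h₂).trans_eq (mul_left_comm ..))
    (second_input.trans_eq (mul_left_comm ..)) (weight_nonneg _ _) (weight_nonneg _ _)
    (weight_nonneg _ _) resonance_nonneg (lt_min one_pos (abs_pos.mpr ha)) (min_le_left _ _)
    (by positivity) (by positivity) (by positivity) (min_one_mul_resonance_le_max z z₁)
    (by linarith) (by linarith) hθb).trans_eq ?_
  rw [interactionKernel_eq]
  ring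

lemma freqMultiplier_mul_le_interactionKernel (ha : a ≠ 0) (hθ : θ ≤ 1 / 2)
    (hρ : 1 - θ ≤ ρ) (hρ' : ρ ≤ 3 * θ - 3 / 4) (hθb : θ ≤ b) :
    freqMultiplier ρ z.2 z₁.2 * ((1 + |modulation a z|) ^ (-θ) *
      ((1 + |modulation a z₁|) ^ (-b) * (1 + |modulation a (z - z₁)|) ^ (-b))) ≤
        (min 1 |a|)⁻¹ * (16 * interactionKernel a b z z₁) := by
  by_cases h : |z₁.2| ≤ 1 ∨ |z.2 - z₁.2| ≤ 1
  · have one_le_inv : 1 ≤ (min 1 |a|)⁻¹ :=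
      (one_le_inv₀ (lt_min one_pos (abs_pos.mpr ha))).mpr (min_le_left _ _)
    have := interactionKernel_nonneg (a := a) (b := b) z z₁
    refine (freqMultiplier_mul_le_interactionKernel_of_small_input z z₁ (by linarith)
      (by linarith) (by linarith) h).trans ?_
    exact le_mul_of_one_le_left (by positivity) one_le_inv
  · rw [not_or, not_le, not_le] at h
    exact freqMultiplier_mul_le_interactionKernel_of_large_inputs z z₁ ha hθ hρ hρ' hθb h.1.le
      h.2.le

end Interaction

section GevreyWeight

/-- The Fourier weight of `X_a^{σ,s,b}`: its square multiplies `|f̂|²` in `XNorm`. -/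
noncomputable def gevreyWeight (a σ s b : ℝ) (z : ℝ × ℝ) : ℝ :=
  Real.exp (σ * |z.2|) * (1 + |z.2|) ^ s * (1 + |modulation a z|) ^ b

variable {a b b' s σ θ ρ : ℝ}

lemma gevreyWeight_nonneg (z : ℝ × ℝ) : 0 ≤ gevreyWeight a σ s b z := by
  unfold gevreyWeight
  positivity

@[fun_prop]
lemma measurable_gevreyWeight : Measurable (gevreyWeight a σ s b) := by
  unfold gevreyWeight modulation
  fun_prop

lemma one_add_rpow_le_of_le_add {x x₁ x₂ : ℝ} (hx : 0 ≤ x) (hx₁ : 0 ≤ x₁) (hx₂ : 0 ≤ x₂)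
    (h : x ≤ x₁ + x₂) (hsρ : 0 ≤ s + ρ) :
    (1 + x) ^ s ≤ (1 + x) ^ (-ρ) * ((1 + x₁) * (1 + x₂)) ^ ρ * ((1 + x₁) ^ s * (1 + x₂) ^ s) := by
  calc (1 + x) ^ s = (1 + x) ^ (-ρ) * (1 + x) ^ (s + ρ) := by
        rw [← Real.rpow_add (by positivity)]
        ring_nf
    _ ≤ (1 + x) ^ (-ρ) * ((1 + x₁) * (1 + x₂)) ^ (s + ρ) := by
        gcongr
        nlinarith
    _ = _ := by
        rw [add_comm s ρ, Real.rpow_add (by positivity), mul_assoc,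
          Real.mul_rpow (z := s) (by positivity) (by positivity)]

lemma gevreyWeight_mul_abs_le (hσ : 0 ≤ σ) (hsρ : 0 ≤ s + ρ) (hb' : b' - 1 ≤ -θ)
    (z z₁ : ℝ × ℝ) :
    gevreyWeight a σ s (b' - 1) z * |z.2| ≤
      freqMultiplier ρ z.2 z₁.2 * ((1 + |modulation a z|) ^ (-θ) *
        ((1 + |modulation a z₁|) ^ (-b) * (1 + |modulation a (z - z₁)|) ^ (-b))) *
          (gevreyWeight a σ s b z₁ * gevreyWeight a σ s b (z - z₁)) := by
  have triangle : |z.2| ≤ |z₁.2| + |z.2 - z₁.2| := by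
    simpa only [add_sub_cancel] using abs_add_le z₁.2 (z.2 - z₁.2)
  have exp_le : Real.exp (σ * |z.2|) ≤ Real.exp (σ * |z₁.2|) * Real.exp (σ * |z.2 - z₁.2|) := by
    rw [← Real.exp_add, ← mul_add]
    gcongr
  have rpow_neg_mul_self (w : ℝ × ℝ) :
      (1 + |modulation a w|) ^ (-b) * (1 + |modulation a w|) ^ b = 1 := by
    rw [← Real.rpow_add (by positivity), neg_add_cancel, Real.rpow_zero]
  calc gevreyWeight a σ s (b' - 1) z * |z.2|
      ≤ Real.exp (σ * |z₁.2|) * Real.exp (σ * |z.2 - z₁.2|) *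
          ((1 + |z.2|) ^ (-ρ) * ((1 + |z₁.2|) * (1 + |z.2 - z₁.2|)) ^ ρ *
            ((1 + |z₁.2|) ^ s * (1 + |z.2 - z₁.2|) ^ s)) *
          (1 + |modulation a z|) ^ (-θ) * |z.2| := by
        rw [gevreyWeight]
        gcongr
        · exact one_add_rpow_le_of_le_add (abs_nonneg _) (abs_nonneg _) (abs_nonneg _) triangle hsρ
        · exact le_add_of_nonneg_right (abs_nonneg _)
    _ = Real.exp (σ * |z₁.2|) * Real.exp (σ * |z.2 - z₁.2|) *
          ((1 + |z.2|) ^ (-ρ) * ((1 + |z₁.2|) * (1 + |z.2 - z₁.2|)) ^ ρ *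
            ((1 + |z₁.2|) ^ s * (1 + |z.2 - z₁.2|) ^ s)) *
          (1 + |modulation a z|) ^ (-θ) * |z.2| *
          (((1 + |modulation a z₁|) ^ (-b) * (1 + |modulation a z₁|) ^ b) *
            ((1 + |modulation a (z - z₁)|) ^ (-b) * (1 + |modulation a (z - z₁)|) ^ b)) := by
        rw [rpow_neg_mul_self, rpow_neg_mul_self, mul_one, mul_one]
    _ = _ := by
        rw [freqMultiplier, gevreyWeight, gevreyWeight, Prod.snd_sub]
        ring

lemma gevreyWeight_mul_abs_le_interactionKernel (ha : a ≠ 0) (hσ : 0 ≤ σ) (hs : -(3 / 4) ≤ s)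
    (hb : 1 / 2 ≤ b) (hb' : b' ≤ 9 / 16) (hb's : b' ≤ s / 3 + 3 / 4) (z z₁ : ℝ × ℝ) :
    gevreyWeight a σ s (b' - 1) z * |z.2| ≤ (min 1 |a|)⁻¹ * (16 * interactionKernel a b z z₁) *
      (gevreyWeight a σ s b z₁ * gevreyWeight a σ s b (z - z₁)) := by
  set θ := min (1 / 2) (1 - b')
  have hθ : θ ≤ 1 / 2 := min_le_left _ _
  have hθb' : θ ≤ 1 - b' := min_le_right _ _
  -- `7 / 16 ≤ θ` leaves room for `ρ` in `1 - θ ≤ ρ ≤ 3 * θ - 3 / 4`.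
  have hθ_ge : 7 / 16 ≤ θ := le_min (by norm_num) (by linarith)
  have hθs : 0 ≤ s + (3 * θ - 3 / 4) := by
    have : 1 / 4 - s / 3 ≤ θ := le_min (by linarith) (by linarith)
    linarith
  refine (gevreyWeight_mul_abs_le (b := b) hσ hθs (by linarith) z z₁).trans ?_
  exact mul_le_mul_of_nonneg_right
    (freqMultiplier_mul_le_interactionKernel z z₁ ha hθ (by linarith) le_rfl (by linarith))
    (mul_nonneg (gevreyWeight_nonneg _) (gevreyWeight_nonneg _))

end GevreyWeight

section Fourier

open FourierTransform LineDeriv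

/-- Transport of a Schwartz function to the Euclidean plane, where Mathlib's Fourier transform
lives. -/
noncomputable def toPlane : SchwartzMap (ℝ × ℝ) ℂ →L[ℂ] SchwartzMap (WithLp 2 (ℝ × ℝ)) ℂ :=
  SchwartzMap.compCLMOfContinuousLinearEquiv ℂ (WithLp.prodContinuousLinearEquiv 2 ℝ ℝ ℝ)

lemma toPlane_toLp (f : SchwartzMap (ℝ × ℝ) ℂ) (p : ℝ × ℝ) :
    toPlane f (WithLp.toLp 2 p) = f p := rfl

lemma measurePreserving_toLp_prod :
    MeasurePreserving (WithLp.toLp 2 : ℝ × ℝ → WithLp 2 (ℝ × ℝ)) :=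
  (WithLp.volume_preserving_symm_measurableEquiv_toLp_prod ℝ ℝ).symm

lemma measurableEmbedding_toLp_prod :
    MeasurableEmbedding (WithLp.toLp 2 : ℝ × ℝ → WithLp 2 (ℝ × ℝ)) :=
  (MeasurableEquiv.toLp 2 (ℝ × ℝ)).measurableEmbedding

lemma FT2_eq_integral_prod (f : SchwartzMap (ℝ × ℝ) ℂ) (τ ξ : ℝ) :
    FT2 (fun t x => f (t, x)) τ ξ =
      ∫ p : ℝ × ℝ, Complex.exp (-Complex.I * (p.1 * τ + p.2 * ξ)) * f p := by
  have norm_exp (p : ℝ × ℝ) : ‖Complex.exp (-Complex.I * (p.1 * τ + p.2 * ξ))‖ ≤ 1 := by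
    have : -Complex.I * (p.1 * τ + p.2 * ξ) = ((-(p.1 * τ + p.2 * ξ) : ℝ) : ℂ) * Complex.I := by
      push_cast
      ring
    rw [this, Complex.norm_exp_ofReal_mul_I]
  exact (integral_prod _ (f.integrable.bdd_mul (Continuous.aestronglyMeasurable (by fun_prop))
    (Eventually.of_forall norm_exp))).symm

/- Mathlib's convolution of Schwartz functions is defined through `𝓕⁻`, hence the use of the inverse
transform at the reflected point. -/
lemma FT2_eq_fourierInv (f : SchwartzMap (ℝ × ℝ) ℂ) (τ ξ : ℝ) :
    FT2 (fun t x => f (t, x)) τ ξ =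
      𝓕⁻ (toPlane f) (WithLp.toLp 2 (-(2 * Real.pi)⁻¹ • (τ, ξ))) := by
  rw [FT2_eq_integral_prod, SchwartzMap.fourierInv_coe, Real.fourierInv_eq,
    ← measurePreserving_toLp_prod.integral_comp measurableEmbedding_toLp_prod]
  congr with p
  rw [toPlane_toLp, Circle.smul_def, Real.fourierChar_apply, smul_eq_mul,
    WithLp.prod_inner_apply]
  congr 2
  simp only [neg_mul, mul_inv_rev, neg_smul, Prod.smul_mk, smul_eq_mul, Prod.neg_mk,
    RCLike.inner_apply, Real.ringHom_apply, Complex.ofReal_mul, Complex.ofReal_ofNat,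
    Complex.ofReal_add, Complex.ofReal_neg, Complex.ofReal_inv]
  field_simp
  ring

lemma continuous_FT2 (f : SchwartzMap (ℝ × ℝ) ℂ) :
    Continuous fun p : ℝ × ℝ => FT2 (fun t x => f (t, x)) p.1 p.2 := by
  simp_rw [FT2_eq_fourierInv]
  have := (𝓕⁻ (toPlane f)).continuous
  have := WithLp.prod_continuous_toLp 2 ℝ ℝ
  fun_prop

lemma FT2_lineDeriv_snd (f : SchwartzMap (ℝ × ℝ) ℂ) (τ ξ : ℝ) :
    FT2 (fun t x => (∂_{((0 : ℝ), (1 : ℝ))} f) (t, x)) τ ξ =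
      Complex.I * ξ * FT2 (fun t x => f (t, x)) τ ξ := by
  have toPlane_lineDeriv : toPlane (∂_{((0 : ℝ), (1 : ℝ))} f) =
      ∂_{WithLp.toLp 2 ((0 : ℝ), (1 : ℝ))} (toPlane f) := by
    rw [toPlane, SchwartzMap.lineDerivOp_compCLMOfContinuousLinearEquiv]
    rfl
  have inner_growth : (fun v : WithLp 2 (ℝ × ℝ) =>
      inner ℝ v (WithLp.toLp 2 ((0 : ℝ), (1 : ℝ)))).HasTemperateGrowth := by
    fun_prop
  rw [FT2_eq_fourierInv, FT2_eq_fourierInv, toPlane_lineDeriv,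
    SchwartzMap.fourierInv_lineDerivOp_eq, smul_apply,
    SchwartzMap.smulLeftCLM_apply_apply inner_growth, WithLp.prod_inner_apply]
  simp only [mul_inv_rev, neg_smul, Prod.smul_mk, smul_eq_mul, Prod.neg_mk, RCLike.inner_apply,
    Real.ringHom_apply, mul_neg, zero_mul, neg_zero, one_mul, zero_add, Complex.real_smul,
    Complex.ofReal_mul, Complex.ofReal_inv, Complex.ofReal_ofNat, neg_mul, neg_neg]
  field_simp

/-- The pointwise product of two Schwartz functions. -/
noncomputable def schwartzMul (f g : SchwartzMap (ℝ × ℝ) ℂ) : SchwartzMap (ℝ × ℝ) ℂ :=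
  SchwartzMap.pairing (ContinuousLinearMap.mul ℂ ℂ) f g

lemma deriv_mul_eq_lineDeriv_schwartzMul (f g : SchwartzMap (ℝ × ℝ) ℂ) (t x : ℝ) :
    deriv (fun y => f (t, y) * g (t, y)) x = (∂_{((0 : ℝ), (1 : ℝ))} (schwartzMul f g)) (t, x) := by
  rw [SchwartzMap.lineDerivOp_apply_eq_fderiv]
  exact ((schwartzMul f g).differentiableAt.hasFDerivAt.comp_hasDerivAt x
    ((hasDerivAt_const x t).prodMk (hasDerivAt_id x))).deriv

lemma fourierInv_toPlane_schwartzMul (f g : SchwartzMap (ℝ × ℝ) ℂ) :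
    𝓕⁻ (toPlane (schwartzMul f g)) = SchwartzMap.convolution (ContinuousLinearMap.mul ℂ ℂ)
      (𝓕⁻ (toPlane f)) (𝓕⁻ (toPlane g)) := by
  have fourier_convolution : 𝓕 (SchwartzMap.convolution (ContinuousLinearMap.mul ℂ ℂ)
      (𝓕⁻ (toPlane f)) (𝓕⁻ (toPlane g))) = toPlane (schwartzMul f g) := by
    rw [SchwartzMap.fourier_convolution, fourier_fourierInv_eq, fourier_fourierInv_eq]
    rfl
  rw [← fourier_convolution, fourierInv_fourier_eq]

lemma FT2_schwartzMul (f g : SchwartzMap (ℝ × ℝ) ℂ) (τ ξ : ℝ) :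
    FT2 (fun t x => schwartzMul f g (t, x)) τ ξ = ((2 * Real.pi)⁻¹ ^ 2 : ℝ) •
      ∫ p : ℝ × ℝ, FT2 (fun t x => f (t, x)) p.1 p.2 *
        FT2 (fun t x => g (t, x)) (τ - p.1) (ξ - p.2) := by
  set c : ℝ := -(2 * Real.pi)⁻¹
  let Φ (p : ℝ × ℝ) : ℂ := 𝓕⁻ (toPlane f) (WithLp.toLp 2 p) *
    𝓕⁻ (toPlane g) (WithLp.toLp 2 (c • (τ, ξ)) - WithLp.toLp 2 p)
  have integrand_eq (p : ℝ × ℝ) : FT2 (fun t x => f (t, x)) p.1 p.2 *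
      FT2 (fun t x => g (t, x)) (τ - p.1) (ξ - p.2) = Φ (c • p) := by
    simp only [Φ, FT2_eq_fourierInv, ← WithLp.toLp_sub, ← smul_sub]
    rfl
  have scaling : ∫ p, Φ (c • p) = ((2 * Real.pi) ^ 2) • ∫ p, Φ p := by
    rw [Measure.integral_comp_smul]
    congr 1
    simp [c, mul_pow, mul_comm]
  rw [FT2_eq_fourierInv, fourierInv_toPlane_schwartzMul, SchwartzMap.convolution_apply,
    convolution_def]
  simp_rw [integrand_eq]
  rw [scaling, smul_smul, inv_pow, inv_mul_cancel₀ (by positivity), one_smul,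
    ← measurePreserving_toLp_prod.integral_comp measurableEmbedding_toLp_prod]
  rfl

lemma enorm_FT2_deriv_mul_le (f g : SchwartzMap (ℝ × ℝ) ℂ) (z : ℝ × ℝ) :
    ‖FT2 (fun t x => deriv (fun y => f (t, y) * g (t, y)) x) z.1 z.2‖ₑ ≤
      ENNReal.ofReal |z.2| * ∫⁻ z₁ : ℝ × ℝ, ‖FT2 (fun t x => f (t, x)) z₁.1 z₁.2‖ₑ *
        ‖FT2 (fun t x => g (t, x)) (z - z₁).1 (z - z₁).2‖ₑ := by
  have two_pi_inv_sq_le_one : (2 * Real.pi)⁻¹ ^ 2 ≤ 1 :=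
    pow_le_one₀ (by positivity) (inv_le_one_of_one_le₀ (by linarith [Real.pi_gt_three]))
  simp_rw [deriv_mul_eq_lineDeriv_schwartzMul, FT2_lineDeriv_snd, FT2_schwartzMul]
  rw [enorm_mul, enorm_smul, ← ofReal_norm (Complex.I * _), norm_mul, Complex.norm_I, one_mul,
    Complex.norm_real, Real.norm_eq_abs]
  gcongr
  calc ‖(2 * Real.pi)⁻¹ ^ 2‖ₑ * ‖∫ z₁ : ℝ × ℝ, FT2 (fun t x => f (t, x)) z₁.1 z₁.2 *
        FT2 (fun t x => g (t, x)) (z.1 - z₁.1) (z.2 - z₁.2)‖ₑ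
      ≤ 1 * ∫⁻ z₁ : ℝ × ℝ, ‖FT2 (fun t x => f (t, x)) z₁.1 z₁.2 *
        FT2 (fun t x => g (t, x)) (z.1 - z₁.1) (z.2 - z₁.2)‖ₑ := by
        gcongr
        · rwa [Real.enorm_of_nonneg (by positivity), ENNReal.ofReal_le_one]
        · exact enorm_integral_le_lintegral_enorm _
    _ = _ := by simp only [one_mul, enorm_mul, Prod.fst_sub, Prod.snd_sub]

end Fourier

section BilinearEstimate

/-- The weighted Fourier transform `w |f̂|`, with `w = gevreyWeight a σ s b`, whose `L²` norm is
`XNorm a σ s b f`. -/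
noncomputable def weightedFT2 (a σ s b : ℝ) (f : ℝ → ℝ → ℂ) (z : ℝ × ℝ) : ℝ≥0∞ :=
  ENNReal.ofReal (gevreyWeight a σ s b z) * ‖FT2 f z.1 z.2‖ₑ

variable {a b b' s σ : ℝ}

lemma measurable_weightedFT2 (f : SchwartzMap (ℝ × ℝ) ℂ) :
    Measurable (weightedFT2 a σ s b fun t x => f (t, x)) := by
  have := (continuous_FT2 f).measurable
  unfold weightedFT2
  fun_prop

lemma weightedFT2_sq (f : ℝ → ℝ → ℂ) (τ ξ : ℝ) :
    weightedFT2 a σ s b f (τ, ξ) ^ 2 =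
      ENNReal.ofReal (Real.exp (2 * σ * |ξ|) * (1 + |ξ|) ^ (2 * s) *
        (1 + |τ - a * ξ ^ 3|) ^ (2 * b) * ‖FT2 f τ ξ‖ ^ 2) := by
  rw [weightedFT2, ← ofReal_norm, ← ENNReal.ofReal_mul (gevreyWeight_nonneg _),
    ← ENNReal.ofReal_pow (mul_nonneg (gevreyWeight_nonneg _) (norm_nonneg _)), gevreyWeight,
    modulation, mul_pow, mul_pow, mul_pow, ← Real.exp_nat_mul,
    ← Real.rpow_mul_natCast (by positivity), ← Real.rpow_mul_natCast (by positivity)]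
  push_cast
  ring_nf

lemma XNorm_eq_eLpNorm_weightedFT2 (f : SchwartzMap (ℝ × ℝ) ℂ) :
    XNorm a σ s b (fun t x => f (t, x)) =
      eLpNorm (weightedFT2 a σ s b fun t x => f (t, x)) 2 volume := by
  have lintegral_sq : ∫⁻ τ, ∫⁻ ξ, weightedFT2 a σ s b (fun t x => f (t, x)) (τ, ξ) ^ 2 =
      eLpNorm (weightedFT2 a σ s b fun t x => f (t, x)) 2 volume ^ 2 := by
    rw [sq_eLpNorm_two, Measure.volume_eq_prod,
      lintegral_prod _ ((measurable_weightedFT2 f).pow_const 2).aemeasurable]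
  simp_rw [XNorm, ← weightedFT2_sq, lintegral_sq]
  rw [← ENNReal.rpow_natCast_mul]
  norm_num

lemma weightedFT2_deriv_mul_le (ha : a ≠ 0) (hσ : 0 ≤ σ) (hs : -(3 / 4) ≤ s) (hb : 1 / 2 ≤ b)
    (hb' : b' ≤ 9 / 16) (hb's : b' ≤ s / 3 + 3 / 4) (f g : SchwartzMap (ℝ × ℝ) ℂ) (z : ℝ × ℝ) :
    weightedFT2 a σ s (b' - 1) (fun t x => deriv (fun y => f (t, y) * g (t, y)) x) z ≤
      ENNReal.ofReal ((min 1 |a|)⁻¹ * 16) *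
        weightedConv volume (fun z z₁ => ENNReal.ofReal (interactionKernel a b z z₁))
          (weightedFT2 a σ s b fun t x => f (t, x))
          (weightedFT2 a σ s b fun t x => g (t, x)) z := by
  rw [weightedConv, ← lintegral_const_mul' _ _ ENNReal.ofReal_ne_top]
  refine (mul_le_mul_right (enorm_FT2_deriv_mul_le f g z) _).trans ?_
  rw [← mul_assoc, ← ENNReal.ofReal_mul (gevreyWeight_nonneg z),
    ← lintegral_const_mul' _ _ ENNReal.ofReal_ne_top]
  refine lintegral_mono fun z₁ => ?_
  have weights_le := ENNReal.ofReal_le_ofReal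
    (gevreyWeight_mul_abs_le_interactionKernel ha hσ hs hb hb' hb's z z₁)
  have const_nonneg : 0 ≤ (min 1 |a|)⁻¹ * 16 := by positivity
  rw [← mul_assoc _ 16,
    ENNReal.ofReal_mul (mul_nonneg const_nonneg (interactionKernel_nonneg z z₁)),
    ENNReal.ofReal_mul const_nonneg, ENNReal.ofReal_mul (gevreyWeight_nonneg z₁)] at weights_le
  refine (mul_le_mul_left weights_le _).trans_eq ?_
  simp only [weightedFT2]
  ring

lemma exists_eLpNorm_weightedConv_interactionKernel_le (ha : a ≠ 0) (hb : 1 / 2 < b) :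
    ∃ M : ℝ≥0∞, M ≠ ⊤ ∧ ∀ F G : ℝ × ℝ → ℝ≥0∞, Measurable F → Measurable G →
      eLpNorm (weightedConv volume (fun z z₁ => ENNReal.ofReal (interactionKernel a b z z₁)) F G)
        2 volume ≤ M * (eLpNorm F 2 volume * eLpNorm G 2 volume) := by
  obtain ⟨M, M_ne_top, hM⟩ := exists_lintegral_airyKernel_sq_le ha hb
  have le_sq : M ≤ (M + 1) ^ 2 := le_self_add.trans (le_self_pow le_add_self two_ne_zero)
  refine ⟨3 * (M + 1), by finiteness, fun F G hF hG => ?_⟩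
  simp_rw [interactionKernel, ENNReal.ofReal_add (airyKernel_nonneg ..)
    (add_nonneg (airyKernel_nonneg ..) (airyKernel_nonneg ..)),
    ENNReal.ofReal_add (airyKernel_nonneg ..) (airyKernel_nonneg ..)]
  exact eLpNorm_weightedConv_add_swap_le (k := fun z z₁ => ENNReal.ofReal (airyKernel a b z z₁))
    (measurable_airyKernel a b).ennreal_ofReal hF hG fun z => (hM z).trans le_sq

lemma exists_XNorm_deriv_mul_le (ha : a ≠ 0) (hb : 1 / 2 < b) :
    ∃ C : ℝ, 0 < C ∧ ∀ s σ b' : ℝ, -(3 / 4) ≤ s → 0 ≤ σ → b' ≤ 9 / 16 → b' ≤ s / 3 + 3 / 4 →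
      ∀ f g : SchwartzMap (ℝ × ℝ) ℂ,
        XNorm a σ s (b' - 1) (fun t x => deriv (fun y => f (t, y) * g (t, y)) x) ≤
          ENNReal.ofReal C *
            (XNorm a σ s b (fun t x => f (t, x)) * XNorm a σ s b (fun t x => g (t, x))) := by
  obtain ⟨M, M_ne_top, hM⟩ := exists_eLpNorm_weightedConv_interactionKernel_le ha hb
  refine ⟨(min 1 |a|)⁻¹ * 16 * (M.toReal + 1), by positivity,
    fun s σ b' hs hσ hb' hb's f g => ?_⟩
  have M_le : M ≤ ENNReal.ofReal (M.toReal + 1) :=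
    ENNReal.le_ofReal_iff_toReal_le M_ne_top (by positivity) |>.mpr (by linarith)
  have pointwise := weightedFT2_deriv_mul_le ha hσ hs hb.le hb' hb's f g
  simp_rw [deriv_mul_eq_lineDeriv_schwartzMul] at pointwise ⊢
  simp_rw [XNorm_eq_eLpNorm_weightedFT2]
  refine (eLpNorm_le_mul_of_le_mul pointwise).trans ?_
  rw [ENNReal.ofReal_mul (by positivity), mul_assoc]
  refine mul_le_mul_right
    ((hM _ _ (measurable_weightedFT2 f) (measurable_weightedFT2 g)).trans ?_) _
  gcongr

end BilinearEstimate

/-- Bilinear estimate (2.2)/(3.1): for `a₁ ≠ 0` and `s > −3/4` there exist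
`b ∈ (1/2,1)`, `ε > 0` and `C > 0` such that for all `σ ≥ 0`, all
`b' ∈ [b, b+ε)` and all Schwartz `f, g` on `ℝ²`:
`‖∂_x(fg)‖_{X_{a₁}^{σ,s,b'−1}} ≤ C ‖f‖_{X_{a₁}^{σ,s,b}} ‖g‖_{X_{a₁}^{σ,s,b}}`. -/
theorem bilinear_uu (a₁ s : ℝ) (ha₁ : a₁ ≠ 0) (hs : -(3/4) < s) :
    ∃ b ∈ Set.Ioo (1/2 : ℝ) 1, ∃ ε : ℝ, 0 < ε ∧ ∃ C : ℝ, 0 < C ∧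
      ∀ σ : ℝ, 0 ≤ σ → ∀ b' ∈ Set.Ico b (b + ε),
        ∀ f g : SchwartzMap (ℝ × ℝ) ℂ,
          XNorm a₁ σ s (b' - 1) (fun t x => deriv (fun y => f (t, y) * g (t, y)) x) ≤
            ENNReal.ofReal C *
              (XNorm a₁ σ s b (fun t x => f (t, x)) * XNorm a₁ σ s b (fun t x => g (t, x))) := by
  set β := min (9 / 16) (s / 3 + 3 / 4)
  have hβ : 1 / 2 < β := lt_min (by norm_num) (by linarith)
  have hβ' : β ≤ 9 / 16 := min_le_left _ _
  have hβs : β ≤ s / 3 + 3 / 4 := min_le_right _ _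
  obtain ⟨C, C_pos, bound⟩ := exists_XNorm_deriv_mul_le (b := (1 / 2 + β) / 2) ha₁ (by linarith)
  exact ⟨(1 / 2 + β) / 2, ⟨by linarith, by linarith⟩, (β - 1 / 2) / 2, by linarith, C, C_pos,
    fun σ hσ b' ⟨_, hb'⟩ => bound s σ b' hs.le hσ (by linarith) (by linarith)⟩
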